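/- Let (A, L_A, Φ_A) and (B, L_B, Φ_B) be two triples as in the context, with respective integers d_A and d_B. If HR^{d_A}(A, L_A, Φ_A) and HR^{d_B}(B, L_B, Φ_B) hold, then HR^{d_A+d_B}(A ⊗ B, L_A ⊗ id + id ⊗ L_B, Φ_A ⊗ Φ_B) holds, where A ⊗ B is graded by (A⊗B)^m = ⨁_{i+j=m} A^i ⊗ B^j and (Φ_A ⊗ Φ_B)(a⊗b, a'⊗b') = Φ_A(a,a')·Φ_B(b,b'). -/

import Mathlib

open Module

namespace PaperHR

variable {V : Type} [AddCommGroup V] [Module ℝ V]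

/-- Weak Poincaré duality `WPD^d`: `dim A^k = dim A^{d-k}` for every `k`. -/
def WPD (d : ℕ) (A : ℤ → Submodule ℝ V) : Prop :=
  ∀ k : ℤ, finrank ℝ (A k) = finrank ℝ (A (d - k))

/-- Poincaré duality `PD^d(A, Φ)`: the bilinear form `Φ` is non-degenerate. -/
def PD (Φ : V →ₗ[ℝ] V →ₗ[ℝ] ℝ) : Prop :=
  ∀ x : V, (∀ y : V, Φ x y = 0) → x = 0

/-- The Hodge–Riemann form in degree `k`: `Q(a,b) = Φ(a, L^{d-2k} b)`. -/
def Q (Φ : V →ₗ[ℝ] V →ₗ[ℝ] ℝ) (L : V →ₗ[ℝ] V) (d k : ℕ) (x y : V) : ℝ :=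
  Φ x ((L ^ (d - 2 * k)) y)

/-- Non-degeneracy of the form `Q` on `⨁_{0 ≤ k ≤ d/2} A^k`.  Since distinct graded
pieces `A^j`, `A^k` (`j ≠ k`) are orthogonal for `Q` by definition, this is equivalent to
the non-degeneracy of the restriction of `Q` to each graded piece `A^k`, `2k ≤ d`. -/
def QNondeg (d : ℕ) (A : ℤ → Submodule ℝ V) (Φ : V →ₗ[ℝ] V →ₗ[ℝ] ℝ) (L : V →ₗ[ℝ] V) : Prop :=
  ∀ k : ℕ, 2 * k ≤ d → ∀ x ∈ A (k : ℤ), (∀ y ∈ A (k : ℤ), Q Φ L d k x y = 0) → x = 0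

/-- Hard Lefschetz `HL^d(A, L, Φ)`. -/
def HL (d : ℕ) (A : ℤ → Submodule ℝ V) (Φ : V →ₗ[ℝ] V →ₗ[ℝ] ℝ) (L : V →ₗ[ℝ] V) : Prop :=
  WPD d A ∧ QNondeg d A Φ L

/-- The maximal dimension of a subspace of `S` on which the form `B` is positive definite. -/
noncomputable def maxPosDim (B : V → V → ℝ) (S : Submodule ℝ V) : ℕ :=
  sSup {m : ℕ | ∃ T : Submodule ℝ V, T ≤ S ∧ finrank ℝ T = m ∧ ∀ x ∈ T, x ≠ 0 → 0 < B x x}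

/-- The maximal dimension of a subspace of `S` on which the form `B` is negative definite. -/
noncomputable def maxNegDim (B : V → V → ℝ) (S : Submodule ℝ V) : ℕ :=
  sSup {m : ℕ | ∃ T : Submodule ℝ V, T ≤ S ∧ finrank ℝ T = m ∧ ∀ x ∈ T, x ≠ 0 → B x x < 0}

/-- The signature of the restriction of the form `B` to `S`. -/
noncomputable def signature (B : V → V → ℝ) (S : Submodule ℝ V) : ℤ :=
  (maxPosDim B S : ℤ) - (maxNegDim B S : ℤ)

/-- Hodge–Riemann `HR^d(A, L, Φ)`. -/
def HR (d : ℕ) (A : ℤ → Submodule ℝ V) (Φ : V →ₗ[ℝ] V →ₗ[ℝ] ℝ) (L : V →ₗ[ℝ] V) : Prop :=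
  WPD d A ∧ ∀ k : ℕ, 2 * k ≤ d →
    signature (Q Φ L d k) (A (k : ℤ)) =
      ∑ i ∈ Finset.range (k + 1),
        (-1 : ℤ) ^ i * ((finrank ℝ (A (i : ℤ)) : ℤ) - (finrank ℝ (A ((i : ℤ) - 1)) : ℤ))

end PaperHR
namespace PaperHR

/-- Exponential of a nilpotent element of a real algebra. -/
noncomputable def rexp {R : Type} [Ring R] [Algebra ℝ R] (a : R) : R :=
  let _ : Module ℚ R := Module.compHom R (algebraMap ℚ ℝ)
  IsNilpotent.exp a

theorem rexp_eq_sum {R : Type} [Ring R] [Algebra ℝ R] {a : R} {k : ℕ} (h : a ^ k = 0) :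
    rexp a = ∑ i ∈ Finset.range k, ((i.factorial : ℝ)⁻¹) • a ^ i := by
  let _ : Module ℚ R := Module.compHom R (algebraMap ℚ ℝ)
  have := IsNilpotent.exp_eq_sum h
  unfold rexp
  rw [this]
  refine Finset.sum_congr rfl fun i _ => ?_
  change (algebraMap ℚ ℝ ((i.factorial : ℚ)⁻¹)) • a ^ i = _
  simp

theorem rexp_add {R : Type} [Ring R] [Algebra ℝ R] {a b : R} (h : Commute a b)
    (ha : IsNilpotent a) (hb : IsNilpotent b) : rexp (a + b) = rexp a * rexp b := by
  let _ : Module ℚ R := Module.compHom R (algebraMap ℚ ℝ)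
  exact IsNilpotent.exp_add_of_commute h ha hb

theorem rexp_map {R S : Type} [Ring R] [Algebra ℝ R] [Ring S] [Algebra ℝ S] {a : R}
    (φ : R →ₐ[ℝ] S) (ha : IsNilpotent a) : φ (rexp a) = rexp (φ a) := by
  obtain ⟨k, hk⟩ := ha
  have hk' : (φ a) ^ k = 0 := by rw [← map_pow, hk, map_zero]
  rw [rexp_eq_sum hk, rexp_eq_sum hk']
  simp

/-- The `sl2`-type data which encodes the Hodge–Riemann property. -/
structure Pack {V : Type} [AddCommGroup V] [Module ℝ V] (ι : Type) (d : ℕ)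
    (A : ℤ → Submodule ℝ V) (Φ : V →ₗ[ℝ] V →ₗ[ℝ] ℝ) (e : V →ₗ[ℝ] V) where
  f : V →ₗ[ℝ] V
  w : V →ₗ[ℝ] V
  b : Basis ι ℝ V
  deg : ι → ℤ
  deg_nonneg : ∀ i, 0 ≤ deg i
  mem_iff : ∀ m x, x ∈ A m ↔ ∀ i, deg i ≠ m → b.repr x i = 0
  he : ∀ m, ∀ x ∈ A m, e x ∈ A (m + 1)
  hf : ∀ m, ∀ x ∈ A m, f x ∈ A (m - 1)
  hw : ∀ m, ∀ x ∈ A m, w x ∈ A (d - m)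
  symm : ∀ x y, Φ x y = Φ y x
  adj : ∀ x y, Φ (e x) y = Φ x (e y)
  diag : ∀ i j, i ≠ j → Φ (b i) (w (b j)) = 0
  pos : ∀ i, 0 < (-1 : ℝ) ^ (deg i).natAbs * Φ (b i) (w (b i))
  enil : IsNilpotent e
  fnil : IsNilpotent f
  hexp : rexp f * w * rexp f = rexp e

section Pack
variable {V : Type} [AddCommGroup V] [Module ℝ V] {ι : Type} {d : ℕ}
    {A : ℤ → Submodule ℝ V} {Φ : V →ₗ[ℝ] V →ₗ[ℝ] ℝ} {e : V →ₗ[ℝ] V}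

theorem pow_mem_deg (he : ∀ m, ∀ x ∈ A m, e x ∈ A (m + 1)) (m : ℤ) (n : ℕ) {x : V} (hx : x ∈ A m) :
    (e ^ n) x ∈ A (m + n) := by
  induction n with
  | zero => simpa using hx
  | succ n ih =>
    rw [pow_succ', Module.End.mul_apply]
    have := he _ _ ih
    convert this using 2
    push_cast; ring

theorem pow_mem_deg' (hf : ∀ m, ∀ x ∈ A m, e x ∈ A (m - 1)) (m : ℤ) (n : ℕ) {x : V}
    (hx : x ∈ A m) : (e ^ n) x ∈ A (m - n) := by
  induction n with
  | zero => simpa using hx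
  | succ n ih =>
    rw [pow_succ', Module.End.mul_apply]
    have := hf _ _ ih
    convert this using 2
    push_cast; ring

theorem pow_adj (adj : ∀ x y, Φ (e x) y = Φ x (e y)) (n : ℕ) (x y : V) :
    Φ ((e ^ n) x) y = Φ x ((e ^ n) y) := by
  induction n generalizing x y with
  | zero => simp
  | succ n ih =>
    rw [pow_succ', Module.End.mul_apply, adj, ih, ← Module.End.mul_apply, ← pow_succ, pow_succ']

namespace Pack

theorem eq_bot (P : Pack ι d A Φ e) {m : ℤ} (hm : m < 0) : A m = ⊥ := by
  rw [eq_bot_iff]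
  intro x hx
  rw [P.mem_iff] at hx
  have : P.b.repr x = 0 := by
    ext i
    exact hx i (by have := P.deg_nonneg i; omega)
  simpa using this

theorem posdef [Finite ι] (P : Pack ι d A Φ e) {m : ℤ} {x : V} (hx : x ∈ A m) (h0 : x ≠ 0) :
    0 < (-1 : ℝ) ^ m.natAbs * Φ x (P.w x) := by
  classical
  have := Fintype.ofFinite ι
  have key : Φ x (P.w x) = ∑ i, (P.b.repr x i) ^ 2 * Φ (P.b i) (P.w (P.b i)) := by
    conv_lhs => rw [← P.b.sum_repr x]
    simp only [map_sum, LinearMap.sum_apply, map_smul, LinearMap.smul_apply, smul_eq_mul]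
    refine Finset.sum_congr rfl fun i _ => ?_
    rw [Finset.sum_eq_single i]
    · ring
    · intro j _ hj
      rw [P.diag j i hj]; simp
    · simp
  rw [key, Finset.mul_sum]
  have hx' := (P.mem_iff m x).1 hx
  have hnn : ∀ i, P.b.repr x i ≠ 0 → 0 < (-1 : ℝ) ^ m.natAbs *
      ((P.b.repr x i) ^ 2 * Φ (P.b i) (P.w (P.b i))) := by
    intro i hi
    have hd : P.deg i = m := by
      by_contra h
      exact hi (hx' i h)
    have := P.pos i
    rw [hd] at this
    have h2 : 0 < (P.b.repr x i) ^ 2 := by positivity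
    calc 0 < (P.b.repr x i) ^ 2 * ((-1 : ℝ) ^ m.natAbs * Φ (P.b i) (P.w (P.b i))) := mul_pos h2 this
      _ = _ := by ring
  apply Finset.sum_pos'
  · intro i _
    by_cases hi : P.b.repr x i = 0
    · simp [hi]
    · exact (hnn i hi).le
  · by_contra hcon
    apply h0
    have : P.b.repr x = 0 := by
      ext i
      by_contra hi
      exact hcon ⟨i, Finset.mem_univ _, hnn i hi⟩
    simpa using this

theorem wpd [Finite ι] [FiniteDimensional ℝ V] (P : Pack ι d A Φ e) : WPD d A := by
  have key : ∀ m : ℤ, finrank ℝ (A m) ≤ finrank ℝ (A (d - m)) := by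
    intro m
    let g : A m →ₗ[ℝ] A (d - m) := P.w.restrict (fun x hx => P.hw m x hx)
    apply LinearMap.finrank_le_finrank_of_injective (f := g)
    rw [← LinearMap.ker_eq_bot, LinearMap.ker_eq_bot']
    rintro ⟨x, hx⟩ h
    by_contra hne
    have hx0 : x ≠ 0 := fun h' => hne (by simp [h'])
    have h1 : P.w x = 0 := by simpa [g, LinearMap.restrict_apply] using h
    have := P.posdef hx hx0
    rw [h1] at this
    simp at this
  intro k
  refine le_antisymm (key k) ?_
  have := key (d - k)
  rwa [sub_sub_cancel] at this

/-- Primitive elements. -/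
theorem prim (P : Pack ι d A Φ e) {k : ℕ} (hk : 2 * k ≤ d) {u : V}
    (hu : u ∈ A k) (hfu : P.f u = 0) :
    P.w u = ((d - 2 * k).factorial : ℝ)⁻¹ • (e ^ (d - 2 * k)) u ∧ (e ^ (d - 2 * k + 1)) u = 0 := by
  obtain ⟨N₁, hN₁⟩ := P.enil
  obtain ⟨N₂, hN₂⟩ := P.fnil
  have hNe : e ^ (N₁ + d + 2) = 0 := by rw [add_assoc, pow_add, hN₁, zero_mul]
  have hNf : P.f ^ (N₂ + 1) = 0 := by rw [pow_add, hN₂, zero_mul]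
  have hfp : ∀ i, (P.f ^ (i + 1)) u = 0 := by
    intro i; rw [pow_succ, Module.End.mul_apply, hfu, map_zero]
  have h1 : rexp P.f u = u := by
    rw [rexp_eq_sum hNf, LinearMap.sum_apply, Finset.sum_range_succ']
    simp [hfp]
  have h2 : rexp P.f (P.w u) = rexp e u := by
    rw [← P.hexp, Module.End.mul_apply, Module.End.mul_apply, h1]
  rw [rexp_eq_sum hNe, rexp_eq_sum hNf, LinearMap.sum_apply, LinearMap.sum_apply] at h2
  have hwu := P.hw _ _ hu
  -- coordinates of the two sides
  have hc1 : ∀ i, (d : ℤ) - k ≤ P.deg i → 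
      P.b.repr (∑ j ∈ Finset.range (N₂ + 1), (((j.factorial : ℝ)⁻¹) • P.f ^ j) (P.w u)) i
        = P.b.repr (P.w u) i := by
    intro i hi
    rw [Finset.sum_range_succ']
    rw [map_add, Finsupp.add_apply, map_sum, Finsupp.finsetSum_apply, Finset.sum_eq_zero]
    · simp
    · intro j _
      have := pow_mem_deg' P.hf _ (j + 1) hwu
      rw [LinearMap.smul_apply, map_smul, Finsupp.smul_apply, (P.mem_iff _ _).1 this i]
      · simp
      · push_cast; omega
  have hc2 : ∀ i, ∀ n : ℕ, n < N₁ + d + 2 → P.deg i = k + n →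
      P.b.repr (∑ j ∈ Finset.range (N₁ + d + 2), (((j.factorial : ℝ)⁻¹) • e ^ j) u) i
        = P.b.repr ((n.factorial : ℝ)⁻¹ • (e ^ n) u) i := by
    intro i n hn hi
    rw [map_sum, Finsupp.finsetSum_apply, Finset.sum_eq_single n]
    · rfl
    · intro j _ hj
      have := pow_mem_deg P.he _ j hu
      rw [LinearMap.smul_apply, map_smul, Finsupp.smul_apply, (P.mem_iff _ _).1 this i]
      · simp
      · omega
    · intro h; exact absurd (Finset.mem_range.2 hn) h
  constructor
  · apply P.b.repr.injective
    ext i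
    by_cases hi : P.deg i = d - k
    · rw [← hc1 i hi.ge, h2, hc2 i (d - 2 * k) (by omega) (by omega)]
    · rw [(P.mem_iff _ _).1 hwu i hi]
      have := pow_mem_deg P.he _ (d - 2 * k) hu
      rw [map_smul, Finsupp.smul_apply, (P.mem_iff _ _).1 this i]
      · simp
      · omega
  · apply P.b.repr.injective
    ext i
    have hm := pow_mem_deg P.he _ (d - 2 * k + 1) hu
    by_cases hi : P.deg i = d - k + 1
    · have h3 := hc2 i (d - 2 * k + 1) (by omega) (by omega)
      rw [← h2, hc1 i (by omega), (P.mem_iff _ _).1 hwu i (by omega)] at h3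
      rw [map_smul, Finsupp.smul_apply, smul_eq_mul] at h3
      have h4 : ((d - 2 * k + 1).factorial : ℝ)⁻¹ ≠ 0 := by positivity
      have := (mul_eq_zero.1 h3.symm).resolve_left h4
      rw [this]; simp
    · rw [(P.mem_iff _ _).1 hm i]
      · simp
      · push_cast; omega

theorem prim_pos [Finite ι] (P : Pack ι d A Φ e) {k : ℕ} (hk : 2 * k ≤ d) {u : V}
    (hu : u ∈ A k) (hfu : P.f u = 0) (h0 : u ≠ 0) :
    0 < (-1 : ℝ) ^ k * Q Φ e d k u u := by
  have h1 := P.posdef hu h0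
  rw [(P.prim hk hu hfu).1, map_smul, smul_eq_mul] at h1
  have h2 : (0 : ℝ) < (d - 2 * k).factorial := by positivity
  have h3 := mul_pos h2 h1
  unfold Q
  have h4 : ((d - 2 * k).factorial : ℝ) ≠ 0 := h2.ne'
  simp only [Int.natAbs_natCast] at h3
  calc _ < _ := h3
    _ = _ := by field_simp

end Pack
end Pack
set_option linter.unusedSectionVars false
section Split
variable {V : Type} [AddCommGroup V] [Module ℝ V] [FiniteDimensional ℝ V] {d : ℕ}
    {A : ℤ → Submodule ℝ V} {Φ : V →ₗ[ℝ] V →ₗ[ℝ] ℝ} {e : V →ₗ[ℝ] V}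

theorem finrank_add_le_of_pos_neg {B : V → V → ℝ} {S T T' : Submodule ℝ V} (hT : T ≤ S)
    (hT' : T' ≤ S) (hpos : ∀ x ∈ T, x ≠ 0 → 0 < B x x) (hneg : ∀ x ∈ T', x ≠ 0 → B x x ≤ 0) :
    finrank ℝ T + finrank ℝ T' ≤ finrank ℝ S := by
  have h : T ⊓ T' = ⊥ := by
    rw [eq_bot_iff]
    rintro x ⟨h1, h2⟩
    by_contra hx
    have hx' : x ≠ 0 := by simpa using hx
    exact absurd (hpos x h1 hx') (not_lt.2 (hneg x h2 hx'))
  have h2 := Submodule.finrank_sup_add_finrank_inf_eq T T'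
  rw [h, finrank_bot, add_zero] at h2
  rw [← h2]
  exact Submodule.finrank_mono (sup_le hT hT')

theorem maxPosDim_spec (B : V → V → ℝ) (S : Submodule ℝ V) :
    (∃ T : Submodule ℝ V, T ≤ S ∧ finrank ℝ T = maxPosDim B S ∧ ∀ x ∈ T, x ≠ 0 → 0 < B x x) ∧
    ∀ T : Submodule ℝ V, T ≤ S → (∀ x ∈ T, x ≠ 0 → 0 < B x x) → finrank ℝ T ≤ maxPosDim B S := by
  have hb : BddAbove {m : ℕ | ∃ T : Submodule ℝ V, T ≤ S ∧ finrank ℝ T = m ∧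
      ∀ x ∈ T, x ≠ 0 → 0 < B x x} := by
    refine ⟨finrank ℝ S, ?_⟩
    rintro m ⟨T, h1, rfl, _⟩
    exact Submodule.finrank_mono h1
  constructor
  · refine Nat.sSup_mem ⟨0, ?_⟩ hb
    exact ⟨⊥, bot_le, finrank_bot _ _, by simp⟩
  · intro T h1 h2
    exact le_csSup hb ⟨T, h1, rfl, h2⟩

theorem maxNegDim_spec (B : V → V → ℝ) (S : Submodule ℝ V) :
    (∃ T : Submodule ℝ V, T ≤ S ∧ finrank ℝ T = maxNegDim B S ∧ ∀ x ∈ T, x ≠ 0 → B x x < 0) ∧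
    ∀ T : Submodule ℝ V, T ≤ S → (∀ x ∈ T, x ≠ 0 → B x x < 0) → finrank ℝ T ≤ maxNegDim B S := by
  have hb : BddAbove {m : ℕ | ∃ T : Submodule ℝ V, T ≤ S ∧ finrank ℝ T = m ∧
      ∀ x ∈ T, x ≠ 0 → B x x < 0} := by
    refine ⟨finrank ℝ S, ?_⟩
    rintro m ⟨T, h1, rfl, _⟩
    exact Submodule.finrank_mono h1
  constructor
  · refine Nat.sSup_mem ⟨0, ?_⟩ hb
    exact ⟨⊥, bot_le, finrank_bot _ _, by simp⟩
  · intro T h1 h2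
    exact le_csSup hb ⟨T, h1, rfl, h2⟩

/-- The alternating sum appearing in the Hodge–Riemann relations. -/
noncomputable def altSum (A : ℤ → Submodule ℝ V) (k : ℕ) : ℤ :=
  ∑ i ∈ Finset.range (k + 1),
    (-1 : ℤ) ^ i * ((finrank ℝ (A (i : ℤ)) : ℤ) - (finrank ℝ (A ((i : ℤ) - 1)) : ℤ))

theorem altSum_succ (A : ℤ → Submodule ℝ V) (k : ℕ) :
    altSum A (k + 1) = altSum A k +
      (-1 : ℤ) ^ (k + 1) * ((finrank ℝ (A ((k + 1 : ℕ) : ℤ)) : ℤ) - (finrank ℝ (A (k : ℤ)) : ℤ)) := by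
  unfold altSum
  rw [Finset.sum_range_succ]
  have : ((k + 1 : ℕ) : ℤ) - 1 = k := by push_cast; ring
  rw [this]

theorem altSum_zero (A : ℤ → Submodule ℝ V) (h : A (-1) = ⊥) :
    altSum A 0 = finrank ℝ (A 0) := by
  simp [altSum, h]

/-- The form `B` on `S` admits a splitting into a positive and a negative definite part, with
signature `s`. -/
def Split (B : V → V → ℝ) (S : Submodule ℝ V) (s : ℤ) : Prop :=
  ∃ Tp Tm : Submodule ℝ V, Tp ≤ S ∧ Tm ≤ S ∧ (∀ x ∈ Tp, x ≠ 0 → 0 < B x x) ∧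
    (∀ x ∈ Tm, x ≠ 0 → B x x < 0) ∧ finrank ℝ Tp + finrank ℝ Tm = finrank ℝ S ∧
    (finrank ℝ Tp : ℤ) - finrank ℝ Tm = s

theorem Split.signature_eq {B : V → V → ℝ} {S : Submodule ℝ V} {s : ℤ} (h : Split B S s) :
    signature B S = s := by
  obtain ⟨Tp, Tm, h1, h2, h3, h4, h5, h6⟩ := h
  obtain ⟨⟨P, p1, p2, p3⟩, p4⟩ := maxPosDim_spec B S
  obtain ⟨⟨N, n1, n2, n3⟩, n4⟩ := maxNegDim_spec B S
  have a1 := p4 Tp h1 h3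
  have a2 := n4 Tm h2 h4
  have a3 := finrank_add_le_of_pos_neg p1 n1 p3 (fun x hx h => (n3 x hx h).le)
  unfold signature
  omega

theorem Q_symm (symm : ∀ x y, Φ x y = Φ y x) (adj : ∀ x y, Φ (e x) y = Φ x (e y)) (k : ℕ) (x y : V) :
    Q Φ e d k x y = Q Φ e d k y x := by
  unfold Q
  rw [symm, pow_adj adj]

theorem Q_e_e (adj : ∀ x y, Φ (e x) y = Φ x (e y)) {k : ℕ} (hk : 2 * (k + 1) ≤ d) (x y : V) :
    Q Φ e d (k + 1) (e x) (e y) = Q Φ e d k x y := by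
  unfold Q
  rw [adj, ← Module.End.mul_apply, ← Module.End.mul_apply, ← pow_succ', ← pow_succ]
  congr 3
  omega

theorem Q_e_right (adj : ∀ x y, Φ (e x) y = Φ x (e y)) (k : ℕ) {u : V}
    (hu : (e ^ (d - 2 * k + 1)) u = 0) (y : V) : Q Φ e d k u (e y) = 0 := by
  unfold Q
  rw [← Module.End.mul_apply, ← pow_succ, ← pow_adj adj, hu]
  simp

/-- Pushing forward a definite subspace by `e`. -/
theorem map_e (adj : ∀ x y, Φ (e x) y = Φ x (e y)) (he : ∀ m, ∀ x ∈ A m, e x ∈ A (m + 1))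
    {k : ℕ} (hk : 2 * (k + 1) ≤ d) {T : Submodule ℝ V} {σ : ℝ} (hT : T ≤ A k)
    (hpos : ∀ x ∈ T, x ≠ 0 → 0 < σ * Q Φ e d k x x) :
    T.map e ≤ A ((k + 1 : ℕ) : ℤ) ∧ finrank ℝ (T.map e) = finrank ℝ T ∧
      ∀ x ∈ T.map e, x ≠ 0 → 0 < σ * Q Φ e d (k + 1) x x := by
  refine ⟨?_, ?_, ?_⟩
  · rintro _ ⟨x, hx, rfl⟩
    have := he _ _ (hT hx)
    simpa using this
  · apply LinearEquiv.finrank_eq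
    symm
    refine LinearEquiv.ofBijective (e.submoduleMap T) ⟨?_, e.submoduleMap_surjective T⟩
    rw [← LinearMap.ker_eq_bot, LinearMap.ker_eq_bot']
    rintro ⟨x, hx⟩ h
    by_contra hne
    have hx0 : x ≠ 0 := fun h' => hne (by simp [h'])
    have h1 : e x = 0 := by simpa using congrArg Subtype.val h
    have := hpos x hx hx0
    rw [← Q_e_e adj hk, h1] at this
    simp [Q] at this
  · rintro _ ⟨x, hx, rfl⟩ h0
    rw [Q_e_e adj hk]
    exact hpos x hx (fun h => h0 (by rw [h, map_zero]))

/-- Orthogonal sum of two definite subspaces of the same sign. -/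
theorem sup_definite (symm : ∀ x y, Φ x y = Φ y x) (adj : ∀ x y, Φ (e x) y = Φ x (e y))
    {k : ℕ} {T T' : Submodule ℝ V} {σ : ℝ}
    (hpos : ∀ x ∈ T, x ≠ 0 → 0 < σ * Q Φ e d k x x)
    (hpos' : ∀ x ∈ T', x ≠ 0 → 0 < σ * Q Φ e d k x x)
    (horth : ∀ x ∈ T, ∀ y ∈ T', Q Φ e d k x y = 0) :
    finrank ℝ (T ⊔ T' : Submodule ℝ V) = finrank ℝ T + finrank ℝ T' ∧
      ∀ x ∈ T ⊔ T', x ≠ 0 → 0 < σ * Q Φ e d k x x := by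
  constructor
  · have h : T ⊓ T' = ⊥ := by
      rw [eq_bot_iff]
      rintro x ⟨h1, h2⟩
      by_contra hx
      have hx' : x ≠ 0 := by simpa using hx
      have := hpos x h1 hx'
      rw [horth x h1 x h2] at this
      simp at this
    have h2 := Submodule.finrank_sup_add_finrank_inf_eq T T'
    rwa [h, finrank_bot, add_zero] at h2
  · intro x hx h0
    obtain ⟨y, hy, z, hz, rfl⟩ := Submodule.mem_sup.1 hx
    have h1 : Q Φ e d k (y + z) (y + z) = Q Φ e d k y y + Q Φ e d k z z := by
      have h2 : Q Φ e d k (y + z) (y + z) = Q Φ e d k y y + Q Φ e d k z z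
          + Q Φ e d k y z + Q Φ e d k z y := by
        simp only [Q, map_add, LinearMap.add_apply]; ring
      rw [h2, Q_symm symm adj k z y, horth y hy z hz]; ring
    rw [h1, mul_add]
    by_cases hy0 : y = 0
    · subst hy0
      rw [zero_add] at h0
      have := hpos' z hz h0
      simpa [Q] using this
    · have h3 := hpos y hy hy0
      by_cases hz0 : z = 0
      · subst hz0
        simpa [Q] using h3
      · exact add_pos h3 (hpos' z hz hz0)

theorem Pack.split {ι : Type} [Finite ι] (P : Pack ι d A Φ e) (k : ℕ) (hk : 2 * k ≤ d) :
    Split (Q Φ e d k) (A k) (altSum A k) := by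
  induction k with
  | zero =>
    refine ⟨A ((0 : ℕ) : ℤ), ⊥, le_rfl, bot_le, ?_, by simp, by simp, ?_⟩
    · intro x hx h0
      have hf : P.f x = 0 := by
        have := P.hf _ _ hx
        rw [P.eq_bot (by simp)] at this
        simpa using this
      simpa using P.prim_pos hk hx hf h0
    · rw [altSum_zero A (P.eq_bot (by simp))]
      simp
  | succ k ih =>
    obtain ⟨Tp, Tm, h1, h2, h3, h4, h5, h6⟩ := ih (by omega)
    have hp := map_e (σ := 1) P.adj P.he hk h1 (by simpa using h3)
    have hm := map_e (σ := -1) P.adj P.he hk h2 (by simpa using h4)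
    obtain ⟨p1, p2, p3⟩ := hp
    obtain ⟨m1, m2, m3⟩ := hm
    set R : Submodule ℝ V := A ((k + 1 : ℕ) : ℤ) ⊓ LinearMap.ker P.f with hR
    have hRp : ∀ x ∈ R, x ≠ 0 → 0 < (-1 : ℝ) ^ (k + 1) * Q Φ e d (k + 1) x x :=
      fun x hx h0 => P.prim_pos hk hx.1 hx.2 h0
    have hRo : ∀ T : Submodule ℝ V, ∀ x ∈ T.map e, ∀ y ∈ R, Q Φ e d (k + 1) x y = 0 := by
      rintro T _ ⟨x, _, rfl⟩ y hy
      rw [Q_symm P.symm P.adj]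
      exact Q_e_right P.adj _ (P.prim hk hy.1 hy.2).2 x
    have hRd : finrank ℝ (A ((k + 1 : ℕ) : ℤ)) ≤ finrank ℝ (A (k : ℤ)) + finrank ℝ R := by
      let g : A ((k + 1 : ℕ) : ℤ) →ₗ[ℝ] A (k : ℤ) := P.f.restrict (fun x hx => by
        have := P.hf _ _ hx
        simpa using this)
      rw [← LinearMap.finrank_range_add_finrank_ker g]
      refine add_le_add (Submodule.finrank_le _) ?_
      rw [← Submodule.finrank_map_subtype_eq]
      apply Submodule.finrank_mono
      rintro _ ⟨x, hx, rfl⟩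
      refine ⟨x.2, ?_⟩
      have : g x = 0 := hx
      simpa [g, LinearMap.restrict_apply] using congrArg Subtype.val this
    have hs := altSum_succ A k
    rcases Nat.even_or_odd (k + 1) with hev | hod
    · rw [hev.neg_one_pow] at hRp hs
      obtain ⟨s1, s2⟩ := sup_definite P.symm P.adj p3 hRp (hRo Tp)
      have p3' : ∀ x ∈ Tp.map e ⊔ R, x ≠ 0 → 0 < Q Φ e d (k + 1) x x := by simpa using s2
      have m3' : ∀ x ∈ Tm.map e, x ≠ 0 → Q Φ e d (k + 1) x x < 0 := by simpa using m3
      have hle : Tp.map e ⊔ R ≤ A ((k + 1 : ℕ) : ℤ) := sup_le p1 inf_le_left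
      have := finrank_add_le_of_pos_neg hle m1 p3' (fun x hx h => (m3' x hx h).le)
      refine ⟨_, _, hle, m1, p3', m3', ?_, ?_⟩ <;> omega
    · rw [hod.neg_one_pow] at hRp hs
      obtain ⟨s1, s2⟩ := sup_definite P.symm P.adj m3 hRp (hRo Tm)
      have p3' : ∀ x ∈ Tp.map e, x ≠ 0 → 0 < Q Φ e d (k + 1) x x := by simpa using p3
      have m3' : ∀ x ∈ Tm.map e ⊔ R, x ≠ 0 → Q Φ e d (k + 1) x x < 0 := by simpa using s2
      have hle : Tm.map e ⊔ R ≤ A ((k + 1 : ℕ) : ℤ) := sup_le m1 inf_le_left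
      have := finrank_add_le_of_pos_neg p1 hle p3' (fun x hx h => (m3' x hx h).le)
      refine ⟨_, _, p1, hle, p3', m3', ?_, ?_⟩ <;> omega

theorem Pack.hr {ι : Type} [Finite ι] (P : Pack ι d A Φ e) : HR d A Φ e :=
  ⟨P.wpd, fun k hk => (P.split k hk).signature_eq⟩

/-- From `HR` to splittings. -/
theorem HR.split (hneg : ∀ k : ℤ, k < 0 → A k = ⊥)
    (adj : ∀ x y, Φ (e x) y = Φ x (e y)) (he : ∀ m, ∀ x ∈ A m, e x ∈ A (m + 1))
    (h : HR d A Φ e) (k : ℕ) (hk : 2 * k ≤ d) :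
    Split (Q Φ e d k) (A k) (altSum A k) := by
  have hsig : ∀ k : ℕ, 2 * k ≤ d → signature (Q Φ e d k) (A k) = altSum A k := h.2
  induction k with
  | zero =>
    obtain ⟨⟨P, p1, p2, p3⟩, p4⟩ := maxPosDim_spec (Q Φ e d 0) (A ((0 : ℕ) : ℤ))
    obtain ⟨⟨N, n1, n2, n3⟩, n4⟩ := maxNegDim_spec (Q Φ e d 0) (A ((0 : ℕ) : ℤ))
    have a3 := finrank_add_le_of_pos_neg p1 n1 p3 (fun x hx h => (n3 x hx h).le)
    have h1 := hsig 0 hk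
    have h0 := altSum_zero A (hneg _ (by simp))
    unfold signature at h1
    have h2 : finrank ℝ (A ((0 : ℕ) : ℤ)) = finrank ℝ (A 0) := by simp
    refine ⟨P, N, p1, n1, p3, n3, ?_, ?_⟩ <;> omega
  | succ k ih =>
    obtain ⟨Tp, Tm, h1, h2, h3, h4, h5, h6⟩ := ih (by omega)
    obtain ⟨q1, q2, q3⟩ := map_e (σ := 1) adj he hk h1 (by simpa using h3)
    obtain ⟨m1, m2, m3⟩ := map_e (σ := -1) adj he hk h2 (by simpa using h4)
    obtain ⟨⟨P, p1, p2, p3⟩, p4⟩ := maxPosDim_spec (Q Φ e d (k + 1)) (A ((k + 1 : ℕ) : ℤ))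
    obtain ⟨⟨N, n1, n2, n3⟩, n4⟩ := maxNegDim_spec (Q Φ e d (k + 1)) (A ((k + 1 : ℕ) : ℤ))
    have a3 := finrank_add_le_of_pos_neg p1 n1 p3 (fun x hx h => (n3 x hx h).le)
    have a4 := p4 _ q1 (by simpa using q3)
    have a5 := n4 _ m1 (by simpa using m3)
    have hs := altSum_succ A k
    have hh := hsig (k + 1) hk
    unfold signature at hh
    rcases Nat.even_or_odd (k + 1) with hev | hod
    · rw [hev.neg_one_pow] at hs
      refine ⟨P, N, p1, n1, p3, n3, ?_, ?_⟩ <;> omega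
    · rw [hod.neg_one_pow] at hs
      refine ⟨P, N, p1, n1, p3, n3, ?_, ?_⟩ <;> omega

/-- A split form is non-degenerate. -/
theorem Split.nondeg (symm : ∀ x y, Φ x y = Φ y x) (adj : ∀ x y, Φ (e x) y = Φ x (e y))
    {k : ℕ} {S : Submodule ℝ V} {s : ℤ} (h : Split (Q Φ e d k) S s) {x : V} (hx : x ∈ S)
    (h0 : ∀ y ∈ S, Q Φ e d k x y = 0) : x = 0 := by
  obtain ⟨Tp, Tm, h1, h2, h3, h4, h5, h6⟩ := h
  have hd : Tp ⊓ Tm = ⊥ := by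
    rw [eq_bot_iff]
    rintro x ⟨h1, h2⟩
    by_contra hx
    have hx' : x ≠ 0 := by simpa using hx
    exact absurd (h3 x h1 hx') (not_lt.2 (h4 x h2 hx').le)
  have hsup : Tp ⊔ Tm = S := by
    apply Submodule.eq_of_le_of_finrank_eq (sup_le h1 h2)
    have := Submodule.finrank_sup_add_finrank_inf_eq Tp Tm
    rw [hd, finrank_bot] at this
    omega
  rw [← hsup] at hx
  obtain ⟨y, hy, z, hz, rfl⟩ := Submodule.mem_sup.1 hx
  have h7 := h0 (y - z) (S.sub_mem (h1 hy) (h2 hz))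
  have h8 : Q Φ e d k (y + z) (y - z) = Q Φ e d k y y - Q Φ e d k z z := by
    have : Q Φ e d k (y + z) (y - z) = Q Φ e d k y y - Q Φ e d k z z
        - Q Φ e d k y z + Q Φ e d k z y := by
      simp only [Q, map_add, map_sub, LinearMap.add_apply]; ring
    rw [this, Q_symm symm adj k z y]; ring
  rw [h8] at h7
  have hyn : 0 ≤ Q Φ e d k y y := by
    by_cases h : y = 0
    · simp [h, Q]
    · exact (h3 y hy h).le
  have hzn : Q Φ e d k z z ≤ 0 := by
    by_cases h : z = 0
    · simp [h, Q]
    · exact (h4 z hz h).le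
  have hy0 : y = 0 := by
    by_contra h
    have := h3 y hy h
    linarith
  have hz0 : z = 0 := by
    by_contra h
    have := h4 z hz h
    linarith
  rw [hy0, hz0, add_zero]

/-- Sign of `Q` on primitive vectors. -/
theorem Split.prim_pos (symm : ∀ x y, Φ x y = Φ y x) (adj : ∀ x y, Φ (e x) y = Φ x (e y))
    (he : ∀ m, ∀ x ∈ A m, e x ∈ A (m + 1)) (hneg : ∀ k : ℤ, k < 0 → A k = ⊥)
    (hS : ∀ k : ℕ, 2 * k ≤ d → Split (Q Φ e d k) (A k) (altSum A k))
    {k : ℕ} (hk : 2 * k ≤ d) {u : V} (hu : u ∈ A k) (hprim : (e ^ (d - 2 * k + 1)) u = 0)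
    (hu0 : u ≠ 0) : 0 < (-1 : ℝ) ^ k * Q Φ e d k u u := by
  obtain ⟨Tp, Tm, h1, h2, h3, h4, h5, h6⟩ := hS k hk
  cases k with
  | zero =>
    have h0 := altSum_zero A (hneg _ (by simp))
    have h7 : finrank ℝ (A ((0 : ℕ) : ℤ)) = finrank ℝ (A 0) := by simp
    have : Tp = A ((0 : ℕ) : ℤ) := Submodule.eq_of_le_of_finrank_eq h1 (by omega)
    have := h3 u (this ▸ hu) hu0
    simpa using this
  | succ k =>
    obtain ⟨Tp', Tm', h1', h2', h3', h4', h5', h6'⟩ := hS k (by omega)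
    obtain ⟨q1, q2, q3⟩ := map_e (σ := 1) adj he hk h1' (by simpa using h3')
    obtain ⟨m1, m2, m3⟩ := map_e (σ := -1) adj he hk h2' (by simpa using h4')
    have hs := altSum_succ A k
    by_contra hcon
    rw [not_lt] at hcon
    have gen : ∀ (T : Submodule ℝ V) (τ : ℝ), (∀ x ∈ T.map e, x ≠ 0 → 0 < τ * Q Φ e d (k + 1) x x) →
        0 ≤ τ * Q Φ e d (k + 1) u u →
        finrank ℝ (T.map e ⊔ Submodule.span ℝ {u} : Submodule ℝ V) = finrank ℝ (T.map e) + 1 ∧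
        ∀ x ∈ T.map e ⊔ Submodule.span ℝ {u}, 0 ≤ τ * Q Φ e d (k + 1) x x := by
      intro T τ hT hτ
      have ho : ∀ x ∈ T.map e, Q Φ e d (k + 1) x u = 0 := by
        rintro _ ⟨x, _, rfl⟩
        rw [Q_symm symm adj]
        exact Q_e_right adj _ hprim x
      constructor
      · have hd : T.map e ⊓ Submodule.span ℝ {u} = ⊥ := by
          rw [eq_bot_iff]
          rintro x ⟨hx1, hx2⟩
          obtain ⟨c, rfl⟩ := Submodule.mem_span_singleton.1 hx2
          by_contra hx
          have hx' : c • u ≠ 0 := by simpa using hx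
          have h9 := hT _ hx1 hx'
          have h10 : Q Φ e d (k + 1) (c • u) (c • u) = c * Q Φ e d (k + 1) (c • u) u := by
            simp [Q]
          rw [h10, ho _ hx1] at h9
          simp at h9
        have := Submodule.finrank_sup_add_finrank_inf_eq (T.map e) (Submodule.span ℝ {u})
        rw [hd, finrank_bot, finrank_span_singleton hu0] at this
        omega
      · intro x hx
        obtain ⟨y, hy, z, hz, rfl⟩ := Submodule.mem_sup.1 hx
        obtain ⟨c, rfl⟩ := Submodule.mem_span_singleton.1 hz
        have h9 : Q Φ e d (k + 1) (y + c • u) (y + c • u) =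
            Q Φ e d (k + 1) y y + c ^ 2 * Q Φ e d (k + 1) u u := by
          have : Q Φ e d (k + 1) (y + c • u) (y + c • u) =
            Q Φ e d (k + 1) y y + c ^ 2 * Q Φ e d (k + 1) u u + c * Q Φ e d (k + 1) y u
              + c * Q Φ e d (k + 1) u y := by
            simp only [Q, map_add, map_smul, LinearMap.add_apply, LinearMap.smul_apply, smul_eq_mul]
            ring
          rw [this, Q_symm symm adj _ u y, ho y hy]; ring
        have h10 : 0 ≤ τ * Q Φ e d (k + 1) y y := by
          by_cases h : y = 0
          · simp [h, Q]
          · exact (hT y hy h).le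
        rw [h9]
        have : τ * (Q Φ e d (k + 1) y y + c ^ 2 * Q Φ e d (k + 1) u u) =
          τ * Q Φ e d (k + 1) y y + c ^ 2 * (τ * Q Φ e d (k + 1) u u) := by ring
        rw [this]
        positivity
    have hsp : Submodule.span ℝ {u} ≤ A ((k + 1 : ℕ) : ℤ) := by
      rw [Submodule.span_le]; simpa using hu
    rcases Nat.even_or_odd (k + 1) with hev | hod
    · rw [hev.neg_one_pow] at hs hcon
      obtain ⟨g1, g2⟩ := gen Tm' (-1) m3 (by linarith)
      have := finrank_add_le_of_pos_neg h1 (sup_le m1 hsp) h3 (fun x hx _ => by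
        have := g2 x hx; linarith)
      omega
    · rw [hod.neg_one_pow] at hs hcon
      obtain ⟨g1, g2⟩ := gen Tp' 1 q3 (by linarith)
      have := finrank_add_le_of_pos_neg (B := fun x y => - Q Φ e d (k + 1) x y) h2 (sup_le q1 hsp)
        (fun x hx h => by have := h4 x hx h; linarith) (fun x hx _ => by
        have := g2 x hx; linarith)
      omega

end Split
section Tensor
open TensorProduct
variable {V : Type} [AddCommGroup V] [Module ℝ V] {ι : Type} {d : ℕ}
    {A : ℤ → Submodule ℝ V} {Φ : V →ₗ[ℝ] V →ₗ[ℝ] ℝ} {e : V →ₗ[ℝ] V}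
    {V' : Type} [AddCommGroup V'] [Module ℝ V'] {ι' : Type} {d' : ℕ}
    {B : ℤ → Submodule ℝ V'} {Ψ : V' →ₗ[ℝ] V' →ₗ[ℝ] ℝ} {e' : V' →ₗ[ℝ] V'}

theorem Pack.eq_span (P : Pack ι d A Φ e) (m : ℤ) :
    A m = Submodule.span ℝ (P.b '' {i | P.deg i = m}) := by
  ext x
  rw [P.mem_iff, Basis.mem_span_image]
  constructor
  · intro h i hi
    by_contra h'
    exact (Finsupp.mem_support_iff.1 hi) (h i h')
  · intro h i hi
    by_contra h'
    exact hi (h (Finsupp.mem_support_iff.2 h'))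

theorem Pack.b_mem (P : Pack ι d A Φ e) (i : ι) : P.b i ∈ A (P.deg i) := by
  rw [P.eq_span]
  exact Submodule.subset_span ⟨i, rfl, rfl⟩

/-- The tensor product grading. -/
def tgr (A : ℤ → Submodule ℝ V) (B : ℤ → Submodule ℝ V') : ℤ → Submodule ℝ (V ⊗[ℝ] V') :=
  fun m : ℤ => ⨆ i : ℤ, Submodule.map₂ (TensorProduct.mk ℝ V V') (A i) (B (m - i))

theorem tmul_mem_tgr {i j m : ℤ} {x : V} {y : V'} (hx : x ∈ A i) (hy : y ∈ B j) (h : i + j = m) :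
    x ⊗ₜ[ℝ] y ∈ tgr A B m := by
  have : j = m - i := by omega
  subst this
  exact Submodule.mem_iSup_of_mem i (Submodule.apply_mem_map₂ _ hx hy)

theorem tgr_eq_span (P : Pack ι d A Φ e) (P' : Pack ι' d' B Ψ e') (m : ℤ) :
    tgr A B m = Submodule.span ℝ ((P.b.tensorProduct P'.b) ''
      {i | P.deg i.1 + P'.deg i.2 = m}) := by
  apply le_antisymm
  · refine iSup_le fun i => ?_
    rw [P.eq_span, P'.eq_span, Submodule.map₂_span_span]
    apply Submodule.span_mono
    rintro _ ⟨_, ⟨a, ha, rfl⟩, _, ⟨b, hb, rfl⟩, rfl⟩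
    refine ⟨(a, b), ?_, by simp⟩
    simp only [Set.mem_ofPred_eq] at *
    omega
  · rw [Submodule.span_le]
    rintro _ ⟨⟨a, b⟩, h, rfl⟩
    rw [Basis.tensorProduct_apply]
    exact tmul_mem_tgr (P.b_mem a) (P'.b_mem b) h

theorem tgr_map (P : Pack ι d A Φ e) (P' : Pack ι' d' B Ψ e') {m : ℤ}
    {S : Submodule ℝ (V ⊗[ℝ] V')} (g : V ⊗[ℝ] V' →ₗ[ℝ] V ⊗[ℝ] V')
    (h : ∀ i j, P.deg i + P'.deg j = m → g (P.b i ⊗ₜ P'.b j) ∈ S) :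
    ∀ x ∈ tgr A B m, g x ∈ S := by
  suffices tgr A B m ≤ S.comap g from fun x hx => this hx
  rw [tgr_eq_span P P', Submodule.span_le]
  rintro _ ⟨⟨a, b⟩, hab, rfl⟩
  rw [Basis.tensorProduct_apply]
  exact h a b hab

theorem rexp_rTensor {a : V →ₗ[ℝ] V} (ha : IsNilpotent a) :
    rexp (LinearMap.rTensor V' a : Module.End ℝ (V ⊗[ℝ] V')) = LinearMap.rTensor V' (rexp a) :=
  (rexp_map (Module.End.rTensorAlgHom ℝ V V') ha).symm

theorem rexp_lTensor {a : V' →ₗ[ℝ] V'} (ha : IsNilpotent a) :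
    rexp (LinearMap.lTensor V a : Module.End ℝ (V ⊗[ℝ] V')) = LinearMap.lTensor V (rexp a) :=
  (rexp_map (Module.End.lTensorAlgHom ℝ V' V) ha).symm

theorem tcomm (a : V →ₗ[ℝ] V) (a' : V' →ₗ[ℝ] V') :
    Commute (LinearMap.rTensor V' a : Module.End ℝ (V ⊗[ℝ] V')) (LinearMap.lTensor V a') := by
  apply TensorProduct.ext'
  intro x y
  simp

theorem tnil {a : V →ₗ[ℝ] V} {a' : V' →ₗ[ℝ] V'} (ha : IsNilpotent a) (ha' : IsNilpotent a') :
    IsNilpotent (LinearMap.rTensor V' a + LinearMap.lTensor V a' : Module.End ℝ (V ⊗[ℝ] V')) :=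
  (tcomm a a').isNilpotent_add (ha.map (Module.End.rTensorAlgHom ℝ V V'))
    (ha'.map (Module.End.lTensorAlgHom ℝ V' V))

theorem rexp_tensor {a : V →ₗ[ℝ] V} {a' : V' →ₗ[ℝ] V'} (ha : IsNilpotent a)
    (ha' : IsNilpotent a') :
    rexp (LinearMap.rTensor V' a + LinearMap.lTensor V a' : Module.End ℝ (V ⊗[ℝ] V')) =
      TensorProduct.map (rexp a) (rexp a') := by
  rw [rexp_add (tcomm a a') (ha.map (Module.End.rTensorAlgHom ℝ V V'))
    (ha'.map (Module.End.lTensorAlgHom ℝ V' V)), rexp_rTensor ha, rexp_lTensor ha']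
  apply TensorProduct.ext'
  intro x y
  simp

noncomputable def Pack.tensor (P : Pack ι d A Φ e) (P' : Pack ι' d' B Ψ e') :
    Pack (ι × ι') (d + d') (tgr A B) (LinearMap.BilinForm.tmul Φ Ψ)
      (LinearMap.rTensor V' e + LinearMap.lTensor V e') where
  f := LinearMap.rTensor V' P.f + LinearMap.lTensor V P'.f
  w := TensorProduct.map P.w P'.w
  b := P.b.tensorProduct P'.b
  deg i := P.deg i.1 + P'.deg i.2
  deg_nonneg i := add_nonneg (P.deg_nonneg _) (P'.deg_nonneg _)
  mem_iff m x := by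
    rw [tgr_eq_span P P', Basis.mem_span_image]
    constructor
    · intro h i hi
      by_contra h'
      exact hi (h (Finsupp.mem_support_iff.2 h'))
    · intro h i hi
      by_contra h'
      exact (Finsupp.mem_support_iff.1 hi) (h i h')
  he m := by
    apply tgr_map P P'
    intro i j hij
    simp only [LinearMap.add_apply, LinearMap.rTensor_tmul, LinearMap.lTensor_tmul]
    exact Submodule.add_mem _ (tmul_mem_tgr (P.he _ _ (P.b_mem i)) (P'.b_mem j) (by omega))
      (tmul_mem_tgr (P.b_mem i) (P'.he _ _ (P'.b_mem j)) (by omega))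
  hf m := by
    apply tgr_map P P'
    intro i j hij
    simp only [LinearMap.add_apply, LinearMap.rTensor_tmul, LinearMap.lTensor_tmul]
    exact Submodule.add_mem _ (tmul_mem_tgr (P.hf _ _ (P.b_mem i)) (P'.b_mem j) (by omega))
      (tmul_mem_tgr (P.b_mem i) (P'.hf _ _ (P'.b_mem j)) (by omega))
  hw m := by
    apply tgr_map P P'
    intro i j hij
    rw [TensorProduct.map_tmul]
    exact tmul_mem_tgr (P.hw _ _ (P.b_mem i)) (P'.hw _ _ (P'.b_mem j)) (by push_cast; omega)
  symm x y := by
    have h1 : LinearMap.IsSymm (Φ : LinearMap.BilinForm ℝ V) := ⟨P.symm⟩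
    have h2 : LinearMap.IsSymm (Ψ : LinearMap.BilinForm ℝ V') := ⟨P'.symm⟩
    exact (h1.tmul h2).eq x y
  adj x y := by
    induction x with
    | zero => simp
    | add x₁ x₂ h₁ h₂ => simp only [map_add, LinearMap.add_apply] at *; linarith
    | tmul a b =>
      induction y with
      | zero => simp
      | add x₁ x₂ h₁ h₂ => simp only [map_add, LinearMap.add_apply] at *; linarith
      | tmul a' b' => simp [P.adj, P'.adj]
  diag := by
    rintro ⟨i, i'⟩ ⟨j, j'⟩ hne
    simp only [Basis.tensorProduct_apply, TensorProduct.map_tmul]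
    by_cases h : i = j
    · have h' : i' ≠ j' := fun h' => hne (by rw [h, h'])
      simp [P'.diag i' j' h']
    · simp [P.diag i j h]
  pos := by
    rintro ⟨i, j⟩
    have h1 := P.pos i
    have h2 := P'.pos j
    have hd : (P.deg i + P'.deg j).natAbs = (P.deg i).natAbs + (P'.deg j).natAbs := by
      have := P.deg_nonneg i
      have := P'.deg_nonneg j
      omega
    simp only [Basis.tensorProduct_apply, TensorProduct.map_tmul, hd, pow_add]
    have := mul_pos h1 h2
    simp only [LinearMap.BilinForm.tensorDistrib_tmul, smul_eq_mul]
    calc _ < _ := this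
      _ = _ := by ring
  enil := tnil P.enil P'.enil
  fnil := tnil P.fnil P'.fnil
  hexp := by
    rw [rexp_tensor P.enil P'.enil, rexp_tensor P.fnil P'.fnil, ← P.hexp, ← P'.hexp]
    apply TensorProduct.ext'
    intro x y
    simp

end Tensor
section Sl2

theorem pow_mul_h {R : Type} [Ring R] [Algebra ℝ R] {f h : R}
    (h2 : f * h = h * f + (2 : ℝ) • f) (i : ℕ) :
    f ^ (i + 1) * h = h * f ^ (i + 1) + (2 * (i + 1) : ℝ) • f ^ (i + 1) := by
  induction i with
  | zero => simp [h2]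
  | succ i ih =>
    rw [pow_succ' f (i + 1), mul_assoc, ih, mul_add, ← mul_assoc, h2, add_mul, mul_smul_comm,
      smul_mul_assoc, mul_assoc, ← pow_succ', add_assoc, ← add_smul]
    congr 2; push_cast; ring

/-- Commutation relation for powers in an `sl2`-type situation. -/
theorem pow_mul_e {R : Type} [Ring R] [Algebra ℝ R] {e f h : R} (h1 : f * e = e * f - h)
    (h2 : f * h = h * f + (2 : ℝ) • f) (i : ℕ) :
    f ^ (i + 1) * e = e * f ^ (i + 1) - ((i + 1) : ℝ) • (h * f ^ i)
      - ((i + 1) * i : ℝ) • f ^ i := by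
  induction i with
  | zero => simp [h1]
  | succ i ih =>
    rw [pow_succ' f (i + 1), mul_assoc, ih, mul_sub, mul_sub, ← mul_assoc f e, h1, sub_mul,
      mul_smul_comm, ← mul_assoc f h, h2, add_mul, mul_smul_comm, smul_mul_assoc, mul_assoc,
      mul_assoc h f, ← pow_succ', ← pow_succ']
    push_cast
    module

theorem fact_inv (i : ℕ) : (((i + 1).factorial : ℝ)⁻¹) * (i + 1) = ((i.factorial : ℝ)⁻¹) := by
  rw [Nat.factorial_succ]; push_cast
  have : (i.factorial : ℝ) ≠ 0 := by positivity
  have : (i : ℝ) + 1 ≠ 0 := by positivity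
  field_simp

theorem rexp_mul_h {R : Type} [Ring R] [Algebra ℝ R] {f h : R} (hf : IsNilpotent f)
    (h2 : f * h = h * f + (2 : ℝ) • f) : rexp f * h = h * rexp f + (2 : ℝ) • (f * rexp f) := by
  obtain ⟨N, hN⟩ := hf
  have hN1 : f ^ (N + 1) = 0 := by rw [pow_succ, hN, zero_mul]
  have e1 := rexp_eq_sum hN1
  have e0 := rexp_eq_sum hN
  have : f * rexp f = ∑ i ∈ Finset.range N, ((i.factorial : ℝ)⁻¹) • f ^ (i + 1) := by
    rw [e0, Finset.mul_sum]
    refine Finset.sum_congr rfl fun i _ => ?_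
    rw [mul_smul_comm, pow_succ']
  rw [this, e1, Finset.sum_range_succ', add_mul, mul_add, Finset.sum_mul, Finset.mul_sum,
    Finset.smul_sum]
  simp only [pow_zero, Nat.factorial_zero, Nat.cast_one, inv_one, one_smul, one_mul, mul_one]
  rw [add_right_comm, ← Finset.sum_add_distrib]
  congr 1
  refine Finset.sum_congr rfl fun i _ => ?_
  rw [smul_mul_assoc, pow_mul_h h2, smul_add, mul_smul_comm, smul_smul, smul_smul, ← fact_inv i]
  congr 2
  ring

theorem rexp_mul_e {R : Type} [Ring R] [Algebra ℝ R] {e f h : R} (hf : IsNilpotent f)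
    (h1 : f * e = e * f - h) (h2 : f * h = h * f + (2 : ℝ) • f) :
    rexp f * e = e * rexp f - h * rexp f - f * rexp f := by
  obtain ⟨N, hN⟩ := hf
  have hN1 : f ^ (N + 1) = 0 := by rw [pow_succ, hN, zero_mul]
  have hN2 : f ^ (N + 1 + 1) = 0 := by rw [pow_succ, hN1, zero_mul]
  have e2 := rexp_eq_sum hN2
  have e1 := rexp_eq_sum hN1
  have e0 := rexp_eq_sum hN
  have a1 : f * rexp f = ∑ i ∈ Finset.range (N + 1),
      (((i + 1).factorial : ℝ)⁻¹ * ((i + 1) * i)) • f ^ i := by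
    rw [Finset.sum_range_succ', e0, Finset.mul_sum]
    simp only [Nat.cast_zero, mul_zero, zero_smul, add_zero]
    refine Finset.sum_congr rfl fun i _ => ?_
    rw [mul_smul_comm, pow_succ', ← fact_inv i, ← fact_inv (i + 1)]
    congr 1
    push_cast; ring
  have a2 : h * rexp f = ∑ i ∈ Finset.range (N + 1),
      (((i + 1).factorial : ℝ)⁻¹ * (i + 1)) • (h * f ^ i) := by
    rw [e1, Finset.mul_sum]
    refine Finset.sum_congr rfl fun i _ => ?_
    rw [mul_smul_comm, fact_inv i]
  rw [a1, a2, e2, Finset.sum_range_succ', add_mul, mul_add, Finset.sum_mul, Finset.mul_sum]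
  simp only [pow_zero, Nat.factorial_zero, Nat.cast_one, inv_one, one_smul, one_mul, mul_one]
  rw [add_sub_right_comm, add_sub_right_comm, ← Finset.sum_sub_distrib, ← Finset.sum_sub_distrib]
  congr 1
  refine Finset.sum_congr rfl fun i _ => ?_
  rw [smul_mul_assoc, pow_mul_e h1 h2, smul_sub, smul_sub, mul_smul_comm, smul_smul, smul_smul]

/-- The Weyl element relation. -/
theorem weyl_comm {R : Type} [Ring R] [Algebra ℝ R] {e f h w : R} (hf : IsNilpotent f)
    (h1 : f * e = e * f - h) (h2 : f * h = h * f + (2 : ℝ) • f)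
    (we : w * e = -(f * w)) (wf : w * f = -(e * w)) :
    (rexp f * w * rexp f) * e = e * (rexp f * w * rexp f) := by
  have wh : w * h = -(h * w) := by
    have : h = e * f - f * e := by rw [h1]; abel
    rw [this, mul_sub, ← mul_assoc, ← mul_assoc, we, wf, neg_mul, neg_mul, mul_assoc, mul_assoc, wf,
      we, sub_mul, mul_assoc, mul_assoc]
    noncomm_ring
  have k1 := rexp_mul_e hf h1 h2
  have k2 := rexp_mul_h hf h2
  set E := rexp f
  have k3 : E * (e + h - f) = e * E := by
    have c : E * f = f * E := by
      obtain ⟨N, hN⟩ := hf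
      have : E = _ := rexp_eq_sum hN
      rw [this, Finset.sum_mul, Finset.mul_sum]
      refine Finset.sum_congr rfl fun i _ => ?_
      rw [smul_mul_assoc, mul_smul_comm, pow_mul_comm']
    rw [mul_sub, mul_add, k1, k2, c]
    module
  calc E * w * E * e = E * (w * (e - h - f)) * E := by
        rw [mul_assoc _ E e, k1]; noncomm_ring
    _ = E * ((e + h - f) * w) * E := by
        congr 2
        rw [mul_sub, mul_sub, we, wf, wh]; noncomm_ring
    _ = E * (e + h - f) * (w * E) := by simp only [mul_assoc]
    _ = _ := by rw [k3]; simp only [mul_assoc]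

theorem rexp_apply {V : Type} [AddCommGroup V] [Module ℝ V] {a : V →ₗ[ℝ] V} (ha : IsNilpotent a)
    {k : ℕ} {x : V} (h : (a ^ k) x = 0) :
    rexp a x = ∑ i ∈ Finset.range k, ((i.factorial : ℝ)⁻¹) • (a ^ i) x := by
  obtain ⟨N, hN⟩ := ha
  have hN1 : a ^ (k + N) = 0 := by rw [pow_add, hN, mul_zero]
  rw [rexp_eq_sum hN1, LinearMap.sum_apply, Finset.sum_range_add]
  rw [Finset.sum_eq_zero (s := Finset.range N)]
  · simp
  · intro i _
    rw [add_comm k i, pow_add, LinearMap.smul_apply, Module.End.mul_apply, h]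
    simp
end Sl2
section Strings
variable {V : Type} [AddCommGroup V] [Module ℝ V] {d : ℕ}
    {A : ℤ → Submodule ℝ V} {Φ : V →ₗ[ℝ] V →ₗ[ℝ] ℝ} {e : V →ₗ[ℝ] V}

/-- A Lefschetz decomposition. -/
structure Strings (κ : Type) (d : ℕ) (A : ℤ → Submodule ℝ V) (Φ : V →ₗ[ℝ] V →ₗ[ℝ] ℝ)
    (e : V →ₗ[ℝ] V) where
  k : κ → ℕ
  hk : ∀ c, 2 * k c ≤ d
  p : κ → V
  mem : ∀ c, p c ∈ A (k c)
  prim : ∀ c, (e ^ (d - 2 * k c + 1)) (p c) = 0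
  pos : ∀ c, 0 < (-1 : ℝ) ^ (k c) * Q Φ e d (k c) (p c) (p c)
  orth : ∀ c c', c ≠ c' → k c = k c' → Q Φ e d (k c) (p c) (p c') = 0
  span : ∀ x, x ∈ Submodule.span ℝ (Set.range
    (fun α : (Σ c, Fin (d - 2 * k c + 1)) => (e ^ (α.2 : ℕ)) (p α.1)))

namespace Strings
variable {κ : Type} (S : Strings κ d A Φ e)

/-- Index type of the string basis. -/
abbrev Idx : Type := Σ c, Fin (d - 2 * S.k c + 1)

/-- Divided powers. -/
noncomputable def Y (c : κ) (j : ℕ) : V := ((j.factorial : ℝ)⁻¹) • (e ^ j) (S.p c)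

theorem pow_zero_of_lt {c : κ} {j : ℕ} (h : d - 2 * S.k c < j) : (e ^ j) (S.p c) = 0 := by
  have : j = (j - (d - 2 * S.k c + 1)) + (d - 2 * S.k c + 1) := by omega
  rw [this, pow_add, Module.End.mul_apply, S.prim, map_zero]

theorem Y_zero_of_lt {c : κ} {j : ℕ} (h : d - 2 * S.k c < j) : S.Y c j = 0 := by
  rw [Y, S.pow_zero_of_lt h, smul_zero]

theorem e_Y (c : κ) (j : ℕ) : e (S.Y c j) = ((j : ℝ) + 1) • S.Y c (j + 1) := by
  rw [Y, Y, map_smul, smul_smul, ← Module.End.mul_apply, ← pow_succ', ← fact_inv j, mul_comm]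

theorem Y_mem (he : ∀ m, ∀ x ∈ A m, e x ∈ A (m + 1)) (c : κ) (j : ℕ) :
    S.Y c j ∈ A ((S.k c : ℤ) + j) :=
  Submodule.smul_mem _ _ (pow_mem_deg he _ _ (S.mem c))

theorem pairing (symm : ∀ x y, Φ x y = Φ y x) (adj : ∀ x y, Φ (e x) y = Φ x (e y))
    (he : ∀ m, ∀ x ∈ A m, e x ∈ A (m + 1))
    (horth : ∀ j k : ℤ, j + k ≠ (d : ℤ) → ∀ x ∈ A j, ∀ y ∈ A k, Φ x y = 0)
    {c c' : κ} {i j : ℕ} (h : ¬ (c = c' ∧ i + j = d - 2 * S.k c)) :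
    Φ (S.Y c i) (S.Y c' j) = 0 := by
  have hc := S.hk c
  have hc' := S.hk c'
  by_cases hd : S.k c + S.k c' + (i + j) = d
  · have hne : c ≠ c' := by
      rintro rfl
      exact h ⟨rfl, by omega⟩
    have : Φ ((e ^ i) (S.p c)) ((e ^ j) (S.p c')) = 0 := by
      rcases lt_trichotomy (S.k c) (S.k c') with hlt | heq | hgt
      · rw [pow_adj adj, ← Module.End.mul_apply, ← pow_add, S.pow_zero_of_lt (by omega), map_zero]
      · rw [pow_adj adj, ← Module.End.mul_apply, ← pow_add]
        have := S.orth c c' hne heq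
        rw [Q] at this
        convert this using 4
        omega
      · rw [← pow_adj adj, ← Module.End.mul_apply, ← pow_add, S.pow_zero_of_lt (by omega), map_zero]
        simp
    simp [Y, this]
  · exact horth _ _ (by omega) _ (S.Y_mem he c i) _ (S.Y_mem he c' j)

theorem pairing_pos (adj : ∀ x y, Φ (e x) y = Φ x (e y)) {c : κ} {i j : ℕ}
    (h : i + j = d - 2 * S.k c) : 0 < (-1 : ℝ) ^ (S.k c) * Φ (S.Y c i) (S.Y c j) := by
  have h1 := S.pos c
  rw [Q, ← h, pow_add, Module.End.mul_apply, ← pow_adj adj] at h1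
  have h2 : (0 : ℝ) < (i.factorial : ℝ)⁻¹ * (j.factorial : ℝ)⁻¹ := by positivity
  have := mul_pos h2 h1
  simp only [Y, map_smul, LinearMap.smul_apply, smul_eq_mul]
  calc _ < _ := this
    _ = _ := by ring

theorem linInd [Finite κ] (symm : ∀ x y, Φ x y = Φ y x) (adj : ∀ x y, Φ (e x) y = Φ x (e y))
    (he : ∀ m, ∀ x ∈ A m, e x ∈ A (m + 1))
    (horth : ∀ j k : ℤ, j + k ≠ (d : ℤ) → ∀ x ∈ A j, ∀ y ∈ A k, Φ x y = 0) :
    LinearIndependent ℝ (fun α : S.Idx => S.Y α.1 α.2) := by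
  have := Fintype.ofFinite κ
  rw [Fintype.linearIndependent_iff]
  rintro g hg ⟨c, j⟩
  have h1 := congrArg (fun x => Φ x (S.Y c (d - 2 * S.k c - j))) hg
  simp only [map_sum, LinearMap.sum_apply, map_smul, LinearMap.smul_apply, map_zero,
    LinearMap.zero_apply, smul_eq_mul] at h1
  have hj := j.2
  rw [Finset.sum_eq_single (⟨c, j⟩ : S.Idx)] at h1
  · have h2 := S.pairing_pos adj (c := c) (i := j) (j := d - 2 * S.k c - j) (by omega)
    rcases mul_eq_zero.1 h1 with h | h
    · exact h
    · rw [h] at h2; simp at h2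
  · rintro ⟨c', i⟩ _ hne
    have hi := i.2
    rw [S.pairing symm adj he horth, mul_zero]
    rintro ⟨h0, h⟩
    dsimp only at h0 h
    subst h0
    apply hne
    have : i = j := Fin.ext (by omega)
    rw [this]
  · simp

theorem span_Y : ⊤ ≤ Submodule.span ℝ (Set.range (fun α : S.Idx => S.Y α.1 α.2)) := by
  intro x _
  have := S.span x
  refine (Submodule.span_le.2 ?_) this
  rintro _ ⟨α, rfl⟩
  have h : (e ^ (α.2 : ℕ)) (S.p α.1) = ((α.2 : ℕ).factorial : ℝ) • S.Y α.1 α.2 := by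
    rw [Y, smul_smul, mul_inv_cancel₀ (by positivity), one_smul]
  simp only [h]
  exact Submodule.smul_mem _ _ (Submodule.subset_span ⟨α, rfl⟩)

end Strings

/-- A homogeneous basis of a graded space. -/
theorem mem_iff_of_basis {ι : Type} (b : Basis ι ℝ V) (deg : ι → ℤ) (hA : DirectSum.IsInternal A)
    (hb : ∀ i, b i ∈ A (deg i)) (m : ℤ) (x : V) :
    x ∈ A m ↔ ∀ i, deg i ≠ m → b.repr x i = 0 := by
  have key : x ∈ Submodule.span ℝ (b '' {i | deg i = m}) ↔ ∀ i, deg i ≠ m → b.repr x i = 0 := by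
    rw [Basis.mem_span_image]
    constructor
    · intro h i hi
      by_contra h'
      exact hi (h (Finsupp.mem_support_iff.2 h'))
    · intro h i hi
      by_contra h'
      exact (Finsupp.mem_support_iff.1 hi) (h i h')
  rw [← key]
  have hle : Submodule.span ℝ (b '' {i | deg i = m}) ≤ A m := by
    rw [Submodule.span_le]
    rintro _ ⟨i, hi, rfl⟩
    exact hi ▸ hb i
  refine ⟨fun hx => ?_, fun hx => hle hx⟩
  have hle' : Submodule.span ℝ (Set.image b {i | deg i = m}ᶜ) ≤ ⨆ j, ⨆ (_ : j ≠ m), A j := by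
    rw [Submodule.span_le]
    rintro _ ⟨i, hi, rfl⟩
    exact Submodule.mem_iSup_of_mem (deg i) (Submodule.mem_iSup_of_mem hi (hb i))
  have htop : x ∈ Submodule.span ℝ (b '' {i | deg i = m}) ⊔
      Submodule.span ℝ (Set.image b {i | deg i = m}ᶜ) := by
    rw [← Submodule.span_union, ← Set.image_union, Set.union_compl_self, Set.image_univ, b.span_eq]
    trivial
  obtain ⟨y, hy, z, hz, rfl⟩ := Submodule.mem_sup.1 htop
  have hz1 : z ∈ A m := by
    have := (A m).sub_mem hx (hle hy)
    simpa using this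
  have := (Submodule.disjoint_def.1 (hA.submodule_iSupIndep m)) z hz1 (hle' hz)
  rw [this, add_zero]
  exact hy

namespace Strings
variable {κ : Type} (S : Strings κ d A Φ e)

theorem pack [Finite κ] (hA : DirectSum.IsInternal A)
    (symm : ∀ x y, Φ x y = Φ y x) (adj : ∀ x y, Φ (e x) y = Φ x (e y))
    (he : ∀ m, ∀ x ∈ A m, e x ∈ A (m + 1))
    (horth : ∀ j k : ℤ, j + k ≠ (d : ℤ) → ∀ x ∈ A j, ∀ y ∈ A k, Φ x y = 0) :
    Nonempty (Pack S.Idx d A Φ e) := by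
  let b : Basis S.Idx ℝ V := Basis.mk (S.linInd symm adj he horth) S.span_Y
  have hb : ∀ c j (hj : j < d - 2 * S.k c + 1), b ⟨c, ⟨j, hj⟩⟩ = S.Y c j := by
    intro c j hj
    simp [b]
  have bext : ∀ g g' : V →ₗ[ℝ] V, (∀ c j, j ≤ d - 2 * S.k c → g (S.Y c j) = g' (S.Y c j)) →
      g = g' := by
    intro g g' h
    apply b.ext
    rintro ⟨c, j, hj⟩
    rw [hb]
    exact h c j (by omega)
  let f : V →ₗ[ℝ] V := b.constr ℝ (fun α => if (α.2 : ℕ) = 0 then 0 else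
    (((d - 2 * S.k α.1 : ℕ) : ℝ) - (α.2 : ℕ) + 1) • S.Y α.1 ((α.2 : ℕ) - 1))
  let w : V →ₗ[ℝ] V := b.constr ℝ (fun α => ((-1 : ℝ) ^ (α.2 : ℕ)) •
    S.Y α.1 (d - 2 * S.k α.1 - (α.2 : ℕ)))
  have hf0 : ∀ c, f (S.Y c 0) = 0 := by
    intro c
    rw [← hb c 0 (by omega)]
    simp [f, Basis.constr_basis]
  have hfs : ∀ c j, j ≤ d - 2 * S.k c →
      f (S.Y c (j + 1)) = (((d - 2 * S.k c : ℕ) : ℝ) - j) • S.Y c j := by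
    intro c j hj
    by_cases hj' : j = d - 2 * S.k c
    · rw [S.Y_zero_of_lt (by omega), map_zero, hj', sub_self, zero_smul]
    · rw [← hb c (j + 1) (by omega)]
      simp only [f, Basis.constr_basis]
      rw [if_neg (by simp)]
      simp only [Nat.add_sub_cancel]
      congr 1
      push_cast; ring
  have hw : ∀ c j, j ≤ d - 2 * S.k c → w (S.Y c j) = ((-1 : ℝ) ^ j) • S.Y c (d - 2 * S.k c - j) := by
    intro c j hj
    rw [← hb c j (by omega)]
    simp only [w, Basis.constr_basis]
  have hmem := mem_iff_of_basis b (fun α => (S.k α.1 : ℤ) + (α.2 : ℕ)) hA (by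
    rintro ⟨c, j, hj⟩
    rw [hb]
    exact S.Y_mem he c j)
  have hmap : ∀ (g : V →ₗ[ℝ] V) (φ : ℤ → ℤ),
      (∀ c j, j ≤ d - 2 * S.k c → g (S.Y c j) ∈ A (φ ((S.k c : ℤ) + j))) →
      ∀ m, ∀ x ∈ A m, g x ∈ A (φ m) := by
    intro g φ h m x hx
    have := Fintype.ofFinite κ
    rw [← b.sum_repr x, map_sum]
    refine Submodule.sum_mem _ ?_
    rintro ⟨c, j, hj⟩ _
    rw [map_smul]
    by_cases hm : (S.k c : ℤ) + j = m
    · apply Submodule.smul_mem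
      rw [hb, ← hm]
      exact h c j (by omega)
    · rw [(hmem m x).1 hx ⟨c, j, hj⟩ hm, zero_smul]
      exact Submodule.zero_mem _
  have fnil' : ∀ c j, j ≤ d - 2 * S.k c → (f ^ (j + 1)) (S.Y c j) = 0 := by
    intro c j
    induction j with
    | zero => intro _; simpa using hf0 c
    | succ j ih =>
      intro hj
      rw [pow_succ, Module.End.mul_apply, hfs c j (by omega), map_smul, ih (by omega), smul_zero]
  have fnil : IsNilpotent f := by
    refine ⟨d + 1, bext _ _ ?_⟩
    intro c j hj
    have : d + 1 = (d - j) + (j + 1) := by omega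
    rw [this, pow_add, Module.End.mul_apply, fnil' c j hj, map_zero, LinearMap.zero_apply]
  have enil : IsNilpotent e := by
    refine ⟨d + 1, bext _ _ ?_⟩
    intro c j hj
    rw [Y, map_smul, ← Module.End.mul_apply, ← pow_add, S.pow_zero_of_lt (by omega), smul_zero,
      LinearMap.zero_apply]
  -- the operator `h`
  have hh : ∀ c j, j ≤ d - 2 * S.k c →
      (e * f - f * e) (S.Y c j) = (2 * (j : ℝ) - (d - 2 * S.k c : ℕ)) • S.Y c j := by
    intro c j hj
    rw [LinearMap.sub_apply, Module.End.mul_apply, Module.End.mul_apply, S.e_Y, map_smul,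
      hfs c j hj]
    cases j with
    | zero =>
      rw [hf0, map_zero]
      push_cast
      module
    | succ j =>
      rw [hfs c j (by omega), map_smul, S.e_Y]
      push_cast
      module
  have h2 : f * (e * f - f * e) = (e * f - f * e) * f + (2 : ℝ) • f := by
    apply bext
    intro c j hj
    rw [Module.End.mul_apply, hh c j hj, map_smul, LinearMap.add_apply, Module.End.mul_apply,
      LinearMap.smul_apply]
    cases j with
    | zero => simp [hf0]
    | succ j =>
      rw [hfs c j (by omega), map_smul, hh c j (by omega)]
      push_cast
      module
  have we : w * e = -(f * w) := by
    apply bext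
    intro c j hj
    rw [Module.End.mul_apply, LinearMap.neg_apply, Module.End.mul_apply, S.e_Y, hw c j hj, map_smul,
      map_smul]
    by_cases hj' : j = d - 2 * S.k c
    · rw [S.Y_zero_of_lt (by omega), hj', Nat.sub_self, hf0]
      simp
    · obtain ⟨t, ht⟩ : ∃ t, d - 2 * S.k c = j + 1 + t := ⟨d - 2 * S.k c - (j + 1), by omega⟩
      have t1 : d - 2 * S.k c - j = t + 1 := by omega
      have t2 : d - 2 * S.k c - (j + 1) = t := by omega
      rw [hw c (j + 1) (by omega), t1, t2, hfs c t (by omega), ht, pow_succ]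
      push_cast
      module
  have wf : w * f = -(e * w) := by
    apply bext
    intro c j hj
    rw [Module.End.mul_apply, LinearMap.neg_apply, Module.End.mul_apply, hw c j hj, map_smul, S.e_Y]
    cases j with
    | zero =>
      rw [hf0, map_zero, S.Y_zero_of_lt (by omega)]
      simp
    | succ j =>
      obtain ⟨t, ht⟩ : ∃ t, d - 2 * S.k c = j + 1 + t := ⟨d - 2 * S.k c - (j + 1), by omega⟩
      have t1 : d - 2 * S.k c - j = t + 1 := by omega
      have t2 : d - 2 * S.k c - (j + 1) = t := by omega
      rw [hfs c j (by omega), map_smul, hw c j (by omega), t1, t2, ht, pow_succ]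
      push_cast
      module
  have hcomm := weyl_comm fnil (h := e * f - f * e) (by abel) h2 we wf
  have hexp0 : ∀ c, (rexp f * w * rexp f) (S.Y c 0) = rexp e (S.Y c 0) := by
    intro c
    rw [Module.End.mul_apply, Module.End.mul_apply]
    have a1 : rexp f (S.Y c 0) = S.Y c 0 := by
      rw [rexp_apply fnil (k := 1) (by simpa using hf0 c)]
      simp
    rw [a1, hw c 0 (by omega), pow_zero, one_smul, Nat.sub_zero]
    have a2 : ∀ i, i ≤ d - 2 * S.k c → (f ^ i) (S.Y c (d - 2 * S.k c)) =
        (i.factorial : ℝ) • S.Y c (d - 2 * S.k c - i) := by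
      intro i
      induction i with
      | zero => simp
      | succ i ih =>
        intro hi
        obtain ⟨t, ht⟩ : ∃ t, d - 2 * S.k c = i + 1 + t := ⟨d - 2 * S.k c - (i + 1), by omega⟩
        have t1 : d - 2 * S.k c - i = t + 1 := by omega
        have t2 : d - 2 * S.k c - (i + 1) = t := by omega
        rw [pow_succ', Module.End.mul_apply, ih (by omega), map_smul, t1, t2, hfs c t (by omega), ht,
          Nat.factorial_succ]
        push_cast
        module
    rw [rexp_apply fnil (fnil' c _ le_rfl), rexp_apply enil (k := d - 2 * S.k c + 1) (by
      simpa [Y] using S.prim c), ← Finset.sum_range_reflect]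
    refine Finset.sum_congr rfl fun i hi => ?_
    have hi' := Finset.mem_range.1 hi
    have t1 : d - 2 * S.k c + 1 - 1 - i = d - 2 * S.k c - i := by omega
    have t2 : d - 2 * S.k c - (d - 2 * S.k c - i) = i := by omega
    rw [t1, a2 _ (by omega), t2, smul_smul, inv_mul_cancel₀ (by positivity), one_smul]
    simp [Y]
  refine ⟨{ f := f, w := w, b := b, deg := fun α => (S.k α.1 : ℤ) + (α.2 : ℕ), 
            deg_nonneg := fun α => by positivity
            mem_iff := hmem
            he := he
            hf := hmap f (fun m => m - 1) ?_
            hw := hmap w (fun m => d - m) ?_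
            symm := symm
            adj := adj
            diag := ?_
            pos := ?_
            enil := enil
            fnil := fnil
            hexp := ?_ }⟩
  · intro c j hj
    cases j with
    | zero => rw [hf0]; exact Submodule.zero_mem _
    | succ j =>
      rw [hfs c j (by omega)]
      apply Submodule.smul_mem
      convert S.Y_mem he c j using 2
      push_cast; ring
  · intro c j hj
    rw [hw c j hj]
    apply Submodule.smul_mem
    convert S.Y_mem he c _ using 2
    have := S.hk c
    omega
  · rintro ⟨c, i, hi⟩ ⟨c', j, hj⟩ hne
    rw [hb, hb, hw c' j (by omega), map_smul, S.pairing symm adj he horth, smul_zero]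
    rintro ⟨rfl, h⟩
    apply hne
    have : i = j := by omega
    subst this
    rfl
  · rintro ⟨c, j, hj⟩
    rw [hb, hw c j (by omega), map_smul]
    have h1 := S.pairing_pos adj (c := c) (i := j) (j := d - 2 * S.k c - j) (by omega)
    have h3 : ((S.k c : ℤ) + (j : ℕ)).natAbs = S.k c + j := by omega
    simp only [h3, pow_add, smul_eq_mul]
    have h4 : ((-1 : ℝ) ^ j) * ((-1 : ℝ) ^ j) = 1 := by
      rw [← mul_pow]; simp
    calc _ < _ := h1
      _ = _ := by linear_combination (-(-1 : ℝ) ^ S.k c * Φ (S.Y c j) (S.Y c (d - 2 * S.k c - j))) * h4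
  · apply bext
    intro c j hj
    have hYj : S.Y c j = ((j.factorial : ℝ)⁻¹) • (e ^ j) (S.Y c 0) := by simp [Y]
    have c1 : (rexp f * w * rexp f) * e ^ j = e ^ j * (rexp f * w * rexp f) :=
      (Commute.pow_right (show Commute _ e from hcomm) j).eq
    have c2 : rexp e * e ^ j = e ^ j * rexp e := by
      obtain ⟨N, hN⟩ := enil
      rw [rexp_eq_sum hN, Finset.sum_mul, Finset.mul_sum]
      refine Finset.sum_congr rfl fun i _ => ?_
      rw [smul_mul_assoc, mul_smul_comm, ← pow_add, ← pow_add, add_comm]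
    rw [hYj, map_smul, map_smul]
    congr 1
    have c3 := congrArg (fun g : V →ₗ[ℝ] V => g (S.Y c 0)) c1
    have c4 := congrArg (fun g : V →ₗ[ℝ] V => g (S.Y c 0)) c2
    refine Eq.trans c3 (Eq.trans ?_ c4.symm)
    exact congrArg (e ^ j) (hexp0 c)

end Strings
end Strings
section Final
variable {V : Type} [AddCommGroup V] [Module ℝ V] [FiniteDimensional ℝ V] {d : ℕ}
    {A : ℤ → Submodule ℝ V} {Φ : V →ₗ[ℝ] V →ₗ[ℝ] ℝ} {e : V →ₗ[ℝ] V}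

theorem lefschetz_surj (symm : ∀ x y, Φ x y = Φ y x) (adj : ∀ x y, Φ (e x) y = Φ x (e y))
    (he : ∀ m, ∀ x ∈ A m, e x ∈ A (m + 1)) (hw : WPD d A)
    (hS : ∀ k : ℕ, 2 * k ≤ d → Split (Q Φ e d k) (A k) (altSum A k))
    {k : ℕ} (hk : 2 * k ≤ d) {z : V} (hz : z ∈ A ((d : ℤ) - k)) :
    ∃ y ∈ A k, (e ^ (d - 2 * k)) y = z := by
  have hm : ∀ x ∈ A k, (e ^ (d - 2 * k)) x ∈ A ((d : ℤ) - k) := by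
    intro x hx
    have := pow_mem_deg he _ (d - 2 * k) hx
    have h2 : (k : ℤ) + ((d - 2 * k : ℕ) : ℤ) = (d : ℤ) - k := by omega
    rwa [h2] at this
  let g : A k →ₗ[ℝ] A ((d : ℤ) - k) := (e ^ (d - 2 * k)).restrict hm
  have hinj : Function.Injective g := by
    rw [injective_iff_map_eq_zero]
    rintro ⟨x, hx⟩ h0
    have h1 : (e ^ (d - 2 * k)) x = 0 := congrArg Subtype.val h0
    have h2 : x = 0 := (hS k hk).nondeg symm adj hx (fun y _ => by
      rw [Q_symm symm adj, Q, h1, map_zero])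
    exact Subtype.ext h2
  have hsurj := (LinearMap.injective_iff_surjective_of_finrank_eq_finrank (hw k)).1 hinj
  obtain ⟨y, hy⟩ := hsurj ⟨z, hz⟩
  exact ⟨y, y.2, congrArg Subtype.val hy⟩

/-- The primitive subspace. -/
def Prim (d : ℕ) (A : ℤ → Submodule ℝ V) (e : V →ₗ[ℝ] V) (k : ℕ) : Submodule ℝ V :=
  A k ⊓ LinearMap.ker (e ^ (d - 2 * k + 1))

theorem le_of_prim_le (symm : ∀ x y, Φ x y = Φ y x) (adj : ∀ x y, Φ (e x) y = Φ x (e y))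
    (he : ∀ m, ∀ x ∈ A m, e x ∈ A (m + 1)) (hneg : ∀ k : ℤ, k < 0 → A k = ⊥) (hw : WPD d A)
    (hS : ∀ k : ℕ, 2 * k ≤ d → Split (Q Φ e d k) (A k) (altSum A k))
    (hA : DirectSum.IsInternal A)
    (W : Submodule ℝ V) (heW : ∀ x ∈ W, e x ∈ W)
    (hW : ∀ k : ℕ, 2 * k ≤ d → Prim d A e k ≤ W) : W = ⊤ := by
  have hbig : ∀ m : ℤ, (d : ℤ) < m → A m = ⊥ := by
    intro m hm
    have h1 := hw m
    rw [hneg (d - m) (by omega), finrank_bot] at h1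
    exact Submodule.finrank_eq_zero.1 h1
  have hpow : ∀ n : ℕ, ∀ x ∈ W, (e ^ n) x ∈ W := by
    intro n
    induction n with
    | zero => intro x hx; simpa using hx
    | succ n ih =>
      intro x hx
      rw [pow_succ', Module.End.mul_apply]
      exact heW _ (ih x hx)
  have low : ∀ k : ℕ, 2 * k ≤ d → A k ≤ W := by
    intro k
    induction k with
    | zero =>
      intro hk x hx
      refine hW 0 hk ⟨hx, ?_⟩
      have := pow_mem_deg he _ (d - 2 * 0 + 1) hx
      rw [hbig _ (by push_cast; omega)] at this
      simpa using this
    | succ k ih =>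
      intro hk x hx
      have h1 := pow_mem_deg he _ (d - 2 * (k + 1) + 1) hx
      have h2 : ((k + 1 : ℕ) : ℤ) + ((d - 2 * (k + 1) + 1 : ℕ) : ℤ) = (d : ℤ) - k := by omega
      rw [h2] at h1
      obtain ⟨y, hy, hy'⟩ := lefschetz_surj symm adj he hw hS (k := k) (by omega) h1
      have h3 : x - e y ∈ Prim d A e (k + 1) := by
        refine ⟨?_, ?_⟩
        · refine Submodule.sub_mem _ hx ?_
          have := he _ _ hy
          push_cast
          exact this
        · rw [SetLike.mem_coe, LinearMap.mem_ker, map_sub, ← hy', ← Module.End.mul_apply, ← pow_succ]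
          have : d - 2 * (k + 1) + 1 + 1 = d - 2 * k := by omega
          rw [this, sub_self]
      have h4 := W.add_mem (hW _ hk h3) (heW _ (ih (by omega) hy))
      simpa using h4
  rw [eq_top_iff, ← hA.submodule_iSup_eq_top]
  refine iSup_le fun m => ?_
  by_cases h1 : m < 0
  · rw [hneg m h1]; exact bot_le
  by_cases h2 : (d : ℤ) < m
  · rw [hbig m h2]; exact bot_le
  by_cases h3 : 2 * m ≤ d
  · obtain ⟨k, rfl⟩ := Int.eq_ofNat_of_zero_le (not_lt.1 h1)
    exact low k (by omega)
  · obtain ⟨k, hk⟩ := Int.eq_ofNat_of_zero_le (show 0 ≤ (d : ℤ) - m by omega)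
    intro x hx
    have hm : m = (d : ℤ) - k := by omega
    rw [hm] at hx
    obtain ⟨y, hy, rfl⟩ := lefschetz_surj symm adj he hw hS (k := k) (by omega) hx
    exact hpow _ _ (low k (by omega) hy)

theorem HR.pack (hA : DirectSum.IsInternal A) (hneg : ∀ k : ℤ, k < 0 → A k = ⊥)
    (symm : ∀ x y, Φ x y = Φ y x) (adj : ∀ x y, Φ (e x) y = Φ x (e y))
    (he : ∀ m, ∀ x ∈ A m, e x ∈ A (m + 1))
    (horth : ∀ j k : ℤ, j + k ≠ (d : ℤ) → ∀ x ∈ A j, ∀ y ∈ A k, Φ x y = 0)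
    (h : HR d A Φ e) : ∃ ι : Type, Finite ι ∧ Nonempty (Pack ι d A Φ e) := by
  have hS := HR.split hneg adj he h
  have hw := h.1
  let q : (k : ℕ) → LinearMap.BilinForm ℝ (Prim d A e k) := fun k =>
    LinearMap.compl₁₂ Φ (Prim d A e k).subtype ((e ^ (d - 2 * k)) ∘ₗ (Prim d A e k).subtype)
  have hq : ∀ k x y, q k x y = Q Φ e d k x y := fun k x y => rfl
  have hex : ∀ k, ∃ v : Basis (Fin (finrank ℝ (Prim d A e k))) ℝ (Prim d A e k),
      (q k).IsOrthoᵢ v := fun k =>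
    LinearMap.BilinForm.exists_orthogonal_basis (B := q k) ⟨fun x y => by
      simp only [hq, RingHom.id_apply]; exact Q_symm symm adj k _ _⟩
  choose v hv using hex
  have hprim : ∀ k i, (e ^ (d - 2 * k + 1)) (v k i : V) = 0 := fun k i => (v k i).2.2
  let S : Strings (Σ k : Fin (d / 2 + 1), Fin (finrank ℝ (Prim d A e k))) d A Φ e :=
    { k := fun c => c.1
      hk := fun c => by have := c.1.2; omega
      p := fun c => (v c.1 c.2 : V)
      mem := fun c => (v c.1 c.2).2.1
      prim := fun c => hprim _ _
      pos := fun c => by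
        refine Split.prim_pos symm adj he hneg hS (by have := c.1.2; omega) (v c.1 c.2).2.1
          (hprim _ _) ?_
        intro h0
        exact (v c.1).ne_zero c.2 (Subtype.ext h0)
      orth := by
        rintro ⟨k, i⟩ ⟨k', i'⟩ hne hkk
        have hkk' : k = k' := Fin.ext hkk
        subst hkk'
        have hii : i ≠ i' := by
          rintro rfl
          exact hne rfl
        exact hv k hii
      span := by
        intro x
        set W := Submodule.span ℝ (Set.range
          (fun α : (Σ c : (Σ k : Fin (d / 2 + 1), Fin (finrank ℝ (Prim d A e k))),
            Fin (d - 2 * (c.1 : ℕ) + 1)) => (e ^ (α.2 : ℕ)) (v α.1.1 α.1.2 : V))) with hWdef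
        have : W = ⊤ := by
          refine le_of_prim_le symm adj he hneg hw hS hA W ?_ ?_
          · have hle : W ≤ W.comap e := by
              conv_lhs => rw [hWdef]
              rw [Submodule.span_le]
              rintro _ ⟨⟨⟨k, i⟩, j⟩, rfl⟩
              change e ((e ^ (j : ℕ)) (v k i : V)) ∈ W
              rw [← Module.End.mul_apply, ← pow_succ']
              by_cases hj : (j : ℕ) + 1 < d - 2 * (k : ℕ) + 1
              · exact Submodule.subset_span ⟨⟨⟨k, i⟩, ⟨(j : ℕ) + 1, hj⟩⟩, rfl⟩
              · have h1 : (j : ℕ) + 1 = d - 2 * (k : ℕ) + 1 := by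
                  have := j.2
                  dsimp only at this
                  omega
                rw [h1, hprim]
                exact W.zero_mem
            exact fun x hx => hle hx
          · intro k hk
            have h1 : Submodule.map (Prim d A e k).subtype
                (Submodule.span ℝ (Set.range (v k))) ≤ W := by
              rw [Submodule.map_span, Submodule.span_le]
              rintro _ ⟨_, ⟨i, rfl⟩, rfl⟩
              exact Submodule.subset_span
                ⟨⟨⟨⟨k, by omega⟩, i⟩, ⟨0, by omega⟩⟩, by simp⟩
            rw [(v k).span_eq, Submodule.map_top, Submodule.range_subtype] at h1
            exact h1
        exact this ▸ Submodule.mem_top }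
  exact ⟨S.Idx, inferInstance, S.pack hA symm adj he horth⟩

end Final
end PaperHR

open PaperHR TensorProduct in
/-- if `HR^{d_A}(A, L_A, Φ_A)` and `HR^{d_B}(B, L_B, Φ_B)` hold, then
`HR^{d_A+d_B}(A ⊗ B, L_A ⊗ id + id ⊗ L_B, Φ_A ⊗ Φ_B)` holds, where `A ⊗ B` carries the
grading `(A ⊗ B)^m = ⨁_{i+j=m} A^i ⊗ B^j` and `(Φ_A ⊗ Φ_B)(a⊗b, a'⊗b') = Φ_A(a,a')·Φ_B(b,b')`. -/
theorem statement3
    {V : Type} [AddCommGroup V] [Module ℝ V] [FiniteDimensional ℝ V]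
    {V' : Type} [AddCommGroup V'] [Module ℝ V'] [FiniteDimensional ℝ V']
    (dA dB : ℕ)
    (A : ℤ → Submodule ℝ V)
    (hA : DirectSum.IsInternal A) (hAneg : ∀ k : ℤ, k < 0 → A k = ⊥)
    (B : ℤ → Submodule ℝ V')
    (hB : DirectSum.IsInternal B) (hBneg : ∀ k : ℤ, k < 0 → B k = ⊥)
    (ΦA : V →ₗ[ℝ] V →ₗ[ℝ] ℝ)
    (hΦAsymm : ∀ x y : V, ΦA x y = ΦA y x)
    (hΦAorth : ∀ j k : ℤ, j + k ≠ (dA : ℤ) → ∀ x ∈ A j, ∀ y ∈ A k, ΦA x y = 0)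
    (ΦB : V' →ₗ[ℝ] V' →ₗ[ℝ] ℝ)
    (hΦBsymm : ∀ x y : V', ΦB x y = ΦB y x)
    (hΦBorth : ∀ j k : ℤ, j + k ≠ (dB : ℤ) → ∀ x ∈ B j, ∀ y ∈ B k, ΦB x y = 0)
    (LA : V →ₗ[ℝ] V)
    (hLA : ∀ k : ℤ, ∀ x ∈ A k, LA x ∈ A (k + 1))
    (hLAadj : ∀ x y : V, ΦA (LA x) y = ΦA x (LA y))
    (LB : V' →ₗ[ℝ] V')
    (hLB : ∀ k : ℤ, ∀ x ∈ B k, LB x ∈ B (k + 1))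
    (hLBadj : ∀ x y : V', ΦB (LB x) y = ΦB x (LB y))
    (hHRA : HR dA A ΦA LA) (hHRB : HR dB B ΦB LB) :
    HR (dA + dB)
      (fun m : ℤ => ⨆ i : ℤ, Submodule.map₂ (TensorProduct.mk ℝ V V') (A i) (B (m - i)))
      (LinearMap.BilinForm.tmul ΦA ΦB)
      (LinearMap.rTensor V' LA + LinearMap.lTensor V LB) := by
  obtain ⟨ι, _, ⟨P⟩⟩ := HR.pack hA hAneg hΦAsymm hLAadj hLA hΦAorth hHRA
  obtain ⟨ι', _, ⟨P'⟩⟩ := HR.pack hB hBneg hΦBsymm hLBadj hLB hΦBorth hHRB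
  exact (P.tensor P').hr
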